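/- D is a *-SH domain if and only if D has finite *-character and, for every pair P, Q of distinct maximal *-ideals of D, P ∩ Q contains no nonzero prime ideal of D. -/

import Mathlib

open scoped nonZeroDivisors

/-- A star operation on the nonzero fractional ideals of an integral domain `D`
with quotient field `K`: it fixes nonzero principal fractional ideals, commutes with
multiplication by nonzero principal fractional ideals, is extensive, monotone and
idempotent (on nonzero fractional ideals). -/
structure StarOperation (D K : Type*) [CommRing D] [IsDomain D] [Field K]
    [Algebra D K] [IsFractionRing D K] where
  star : FractionalIdeal D⁰ K → FractionalIdeal D⁰ K
  star_spanSingleton : ∀ x : K, x ≠ 0 →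
    star (FractionalIdeal.spanSingleton D⁰ x) = FractionalIdeal.spanSingleton D⁰ x
  star_smul : ∀ (x : K) (I : FractionalIdeal D⁰ K), x ≠ 0 → I ≠ 0 →
    star (FractionalIdeal.spanSingleton D⁰ x * I) = FractionalIdeal.spanSingleton D⁰ x * star I
  le_star : ∀ I : FractionalIdeal D⁰ K, I ≠ 0 → I ≤ star I
  star_mono : ∀ I J : FractionalIdeal D⁰ K, I ≠ 0 → J ≠ 0 → I ≤ J → star I ≤ star J
  star_idem : ∀ I : FractionalIdeal D⁰ K, I ≠ 0 → star (star I) = star I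

namespace StarOperation

variable {D K : Type*} [CommRing D] [IsDomain D] [Field K] [Algebra D K] [IsFractionRing D K]
variable (s : StarOperation D K)

/-- `*` has finite character: for every nonzero fractional ideal `I`, `I^*` is the union
of `J^*` over the nonzero finitely generated fractional subideals `J` of `I`. -/
def FiniteCharacter : Prop :=
  ∀ I : FractionalIdeal D⁰ K, I ≠ 0 → ∀ x ∈ s.star I,
    ∃ J : FractionalIdeal D⁰ K, J ≠ 0 ∧ (J : Submodule D K).FG ∧ J ≤ I ∧ x ∈ s.star J

/-- A (nonzero) integral ideal `I` of `D` is a `*`-ideal if `I^* = I`. -/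
def IsStarIdeal (I : Ideal D) : Prop :=
  I ≠ ⊥ ∧ s.star (I : FractionalIdeal D⁰ K) = (I : FractionalIdeal D⁰ K)

/-- An integral ideal `I` of `D` is a `*`-ideal of finite type if `I = J^*` for some
nonzero finitely generated ideal `J`. -/
def IsFiniteTypeStarIdeal (I : Ideal D) : Prop :=
  ∃ J : Ideal D, J ≠ ⊥ ∧ J.FG ∧
    s.star (J : FractionalIdeal D⁰ K) = (I : FractionalIdeal D⁰ K)

/-- A maximal `*`-ideal: maximal among proper integral `*`-ideals. -/
def IsMaxStarIdeal (M : Ideal D) : Prop :=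
  M ≠ ⊤ ∧ s.IsStarIdeal M ∧ ∀ J : Ideal D, J ≠ ⊤ → s.IsStarIdeal J → M ≤ J → J = M

/-- `I` is `*`-homogeneous: a proper `*`-ideal of finite type such that `(J + J')^* ≠ D`
for every pair `J`, `J'` of proper `*`-ideals of finite type containing `I`. -/
def IsHomog (I : Ideal D) : Prop :=
  I ≠ ⊤ ∧ s.IsStarIdeal I ∧ s.IsFiniteTypeStarIdeal I ∧
    ∀ J J' : Ideal D, J ≠ ⊤ → J' ≠ ⊤ → s.IsStarIdeal J → s.IsStarIdeal J' →
      s.IsFiniteTypeStarIdeal J → s.IsFiniteTypeStarIdeal J' → I ≤ J → I ≤ J' →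
      s.star ((J + J' : Ideal D) : FractionalIdeal D⁰ K) ≠ 1

/-- The set `M(I) = {x ∈ D : (xD + I)^* ≠ D}` attached to an ideal `I`. -/
def MSet (I : Ideal D) : Set D :=
  {x : D | s.star ((Ideal.span {x} + I : Ideal D) : FractionalIdeal D⁰ K) ≠ 1}

/-- `A` and `B` are `*`-comaximal if `(A + B)^* = D`. -/
def StarComaximal (A B : Ideal D) : Prop :=
  s.star ((A + B : Ideal D) : FractionalIdeal D⁰ K) = 1

/-- An integral ideal `I` is `*`-invertible if `(I · I⁻¹)^* = D`. -/
def StarInvertible (I : Ideal D) : Prop :=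
  s.star ((I : FractionalIdeal D⁰ K) * (I : FractionalIdeal D⁰ K)⁻¹) = 1

/-- `D` is a `*`-SH domain: every principal ideal generated by a nonzero nonunit is a
`*`-product of finitely many `*`-homogeneous ideals. -/
def IsSHDomain : Prop :=
  ∀ x : D, x ≠ 0 → ¬IsUnit x →
    ∃ T : Multiset (Ideal D), (∀ J ∈ T, s.IsHomog J) ∧
      s.star ((T.prod : Ideal D) : FractionalIdeal D⁰ K) =
        ((Ideal.span {x} : Ideal D) : FractionalIdeal D⁰ K)

/-- `D` has finite `*`-character: every nonzero nonunit lies in only finitely many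
maximal `*`-ideals. -/
def FiniteStarCharacter : Prop :=
  ∀ x : D, x ≠ 0 → ¬IsUnit x → {P : Ideal D | s.IsMaxStarIdeal P ∧ x ∈ P}.Finite

end StarOperation

/-!
A `*`-ideal of finite type is `*`-homogeneous exactly when it lies in a unique maximal `*`-ideal.
If `xD` is a `*`-product of `*`-homogeneous ideals, every prime containing `x` contains one of the
factors; so only finitely many maximal `*`-ideals contain `x`, and two of them that contain a
common nonzero prime coincide. Conversely, if `P` and `Q` contain no common nonzero prime, then
`xD` meets the product of their complements: `x ∣ a * b` with `a ∉ P` and `b ∉ Q`. Adjoining such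
elements `b` to `x`, one for each of the finitely many other maximal `*`-ideals `Q ∋ x`, gives a
finitely generated ideal that lies only in `P` and equals `xD` locally at `P`. Comparing locally,
the `*`-product of these ideals is `xD`.
-/

section Ideals

variable {R : Type*}

theorem exists_fg_le_sup_of_fg_of_le_sup [Semiring R] {M : Type*} [AddCommMonoid M] [Module R M]
    {N N₁ N₂ : Submodule R M} (hN : N.FG) (hle : N ≤ N₁ ⊔ N₂) :
    ∃ L₁ ≤ N₁, ∃ L₂ ≤ N₂, L₁.FG ∧ L₂.FG ∧ N ≤ L₁ ⊔ L₂ := by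
  induction N, hN using Submodule.fg_induction with
  | singleton x =>
    rw [Submodule.span_singleton_le_iff_mem] at hle
    obtain ⟨y, hy, z, hz, rfl⟩ := Submodule.mem_sup.mp hle
    refine ⟨R ∙ y, by simpa using hy, R ∙ z, by simpa using hz, Submodule.fg_span_singleton y,
      Submodule.fg_span_singleton z, ?_⟩
    rw [Submodule.span_singleton_le_iff_mem]
    exact Submodule.add_mem_sup (Submodule.mem_span_singleton_self y)
      (Submodule.mem_span_singleton_self z)
  | sup N N' _ _ ih ih' =>
    obtain ⟨L₁, hL₁, L₂, hL₂, fg₁, fg₂, hN⟩ := ih (le_sup_left.trans hle)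
    obtain ⟨L₁', hL₁', L₂', hL₂', fg₁', fg₂', hN'⟩ := ih' (le_sup_right.trans hle)
    refine ⟨L₁ ⊔ L₁', sup_le hL₁ hL₁', L₂ ⊔ L₂', sup_le hL₂ hL₂', fg₁.sup fg₁', fg₂.sup fg₂', ?_⟩
    rw [sup_sup_sup_comm]
    exact sup_le_sup hN hN'

theorem colon_mul_le [CommSemiring R] (I J : Ideal R) : I.colon (J : Set R) * J ≤ I :=
  Ideal.mul_le.mpr fun _ ha b hb => Submodule.mem_colon.mp ha b hb

theorem exists_dvd_mul_of_forall_isPrime_not_le_inf [CommSemiring R] {P Q : Ideal R} [P.IsPrime]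
    [Q.IsPrime] {x : R} (h : ∀ L : Ideal R, L.IsPrime → x ∈ L → ¬ L ≤ P ⊓ Q) :
    ∃ a ∉ P, ∃ b ∉ Q, x ∣ a * b := by
  by_contra! hdvd
  have hdisj : Disjoint (Ideal.span {x} : Set R) (P.primeCompl ⊔ Q.primeCompl : Submonoid R) := by
    rw [Set.disjoint_left]
    intro y hxy hy
    obtain ⟨a, ha, b, hb, rfl⟩ := Submonoid.mem_sup.mp hy
    exact hdvd a ha b hb (Ideal.mem_span_singleton.mp hxy)
  obtain ⟨L, hL, hxL, hLdisj⟩ := Ideal.exists_le_prime_disjoint _ _ hdisj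
  have le_of_primeCompl_le (P' : Ideal R) [P'.IsPrime]
      (hP' : P'.primeCompl ≤ P.primeCompl ⊔ Q.primeCompl) : L ≤ P' := fun y hy =>
    of_not_not fun hyP' => Set.disjoint_left.mp hLdisj hy (hP' hyP')
  exact h L hL ((Ideal.span_singleton_le_iff_mem L).mp hxL)
    (le_inf (le_of_primeCompl_le P le_sup_left) (le_of_primeCompl_le Q le_sup_right))

theorem exists_fg_mem_forall_not_le_colon_not_le [CommSemiring R] {P : Ideal R} [P.IsPrime] {x : R}
    (F : Finset (Ideal R)) (hF : ∀ Q ∈ F, ∃ a ∉ P, ∃ b ∉ Q, x ∣ a * b) :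
    ∃ A : Ideal R, A.FG ∧ x ∈ A ∧ (∀ Q ∈ F, ¬ A ≤ Q) ∧
      ¬ (Ideal.span {x}).colon (A : Set R) ≤ P := by
  classical
  induction F using Finset.induction_on with
  | empty =>
    refine ⟨Ideal.span {x}, Submodule.fg_span_singleton x, Ideal.mem_span_singleton_self x,
      by simp, ?_⟩
    rw [(Submodule.colon_eq_top_iff_subset _).mpr subset_rfl, top_le_iff]
    exact Ideal.IsPrime.ne_top'
  | insert Q F _ ih =>
    obtain ⟨A, hfg, hxA, hAF, hcolon⟩ := ih fun Q' hQ' => hF Q' (Finset.mem_insert_of_mem hQ')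
    obtain ⟨a, ha, b, hb, hxab⟩ := hF Q (Finset.mem_insert_self Q F)
    have ha_mem : a ∈ (Ideal.span {x}).colon {b} :=
      Submodule.mem_colon_singleton.mpr (Ideal.mem_span_singleton.mpr hxab)
    have hcolon_sup : (Ideal.span {x}).colon (A : Set R) ⊓ (Ideal.span {x}).colon {b} ≤
        (Ideal.span {x}).colon (A ⊔ Ideal.span {b} : Ideal R) := by
      rw [← Submodule.colon_union, ← Ideal.colon_span (S := _ ∪ _), Ideal.span_union,
        Ideal.span_eq]
    refine ⟨A ⊔ Ideal.span {b}, Submodule.FG.sup hfg (Submodule.fg_span_singleton b),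
      Ideal.mem_sup_left hxA, fun Q' hQ' hle => ?_, fun hle => ?_⟩
    · rcases Finset.mem_insert.mp hQ' with rfl | hQ'
      · exact hb (hle (Ideal.mem_sup_right (Ideal.mem_span_singleton_self b)))
      · exact hAF Q' hQ' (le_sup_left.trans hle)
    · rcases (Ideal.IsPrime.inf_le (P := P) inferInstance).mp (hcolon_sup.trans hle) with h | h
      · exact hcolon h
      · exact ha (h ha_mem)

end Ideals

namespace StarOperation

variable {D K : Type*} [CommRing D] [IsDomain D] [Field K] [Algebra D K] [IsFractionRing D K]
variable (s : StarOperation D K)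

section Closure

theorem star_one : s.star 1 = 1 := by
  simpa using s.star_spanSingleton 1 one_ne_zero

theorem exists_star_coeIdeal_eq {I : Ideal D} (hI : I ≠ ⊥) :
    ∃ J : Ideal D, s.star (I : FractionalIdeal D⁰ K) = J := by
  have hle : s.star (I : FractionalIdeal D⁰ K) ≤ 1 := s.star_one ▸
    s.star_mono _ _ (FractionalIdeal.coeIdeal_ne_zero.mpr hI) one_ne_zero
      FractionalIdeal.coeIdeal_le_one
  obtain ⟨J, hJ⟩ := FractionalIdeal.le_one_iff_exists_coeIdeal.mp hle
  exact ⟨J, hJ.symm⟩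

theorem star_coeIdeal_mono {I J : Ideal D} (hI : I ≠ ⊥) (h : I ≤ J) :
    s.star (I : FractionalIdeal D⁰ K) ≤ s.star (J : FractionalIdeal D⁰ K) :=
  s.star_mono _ _ (FractionalIdeal.coeIdeal_ne_zero.mpr hI)
    (FractionalIdeal.coeIdeal_ne_zero.mpr (ne_bot_of_le_ne_bot hI h))
    ((FractionalIdeal.coeIdeal_le_coeIdeal K).mpr h)

theorem isStarIdeal_sInf {S : Set (Ideal D)} (hS : ∀ J ∈ S, J = ⊥ ∨ s.IsStarIdeal J) :
    sInf S = ⊥ ∨ s.IsStarIdeal (sInf S) := by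
  refine or_iff_not_imp_left.mpr fun hne => ⟨hne, le_antisymm ?_
    (s.le_star _ (FractionalIdeal.coeIdeal_ne_zero.mpr hne))⟩
  obtain ⟨I, hI⟩ := s.exists_star_coeIdeal_eq hne
  rw [hI, FractionalIdeal.coeIdeal_le_coeIdeal]
  refine le_sInf fun J hJ => ?_
  have hJne : J ≠ ⊥ := ne_bot_of_le_ne_bot hne (sInf_le hJ)
  rw [← FractionalIdeal.coeIdeal_le_coeIdeal K, ← hI, ← ((hS J hJ).resolve_left hJne).2]
  exact s.star_coeIdeal_mono hne (sInf_le hJ)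

/-- The closure operator `I ↦ I*` on the integral ideals of `D`. Its closed ideals are the
`*`-ideals and `0`, so that it fixes `0`, where `s.star` is unconstrained. -/
noncomputable def idealClosure : ClosureOperator (Ideal D) :=
  .ofCompletePred (fun I => I = ⊥ ∨ s.IsStarIdeal I) fun _ => s.isStarIdeal_sInf

variable {s} in
theorem IsStarIdeal.isClosed {I : Ideal D} (hI : s.IsStarIdeal I) : s.idealClosure.IsClosed I :=
  Or.inr hI

theorem isStarIdeal_iff {I : Ideal D} :
    s.IsStarIdeal I ↔ I ≠ ⊥ ∧ s.idealClosure.IsClosed I :=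
  ⟨fun hI => ⟨hI.1, hI.isClosed⟩, fun hI => hI.2.resolve_left hI.1⟩

theorem idealClosure_bot : s.idealClosure ⊥ = ⊥ :=
  (show s.idealClosure.IsClosed ⊥ from Or.inl rfl).closure_eq

theorem isStarIdeal_idealClosure {I : Ideal D} (hI : I ≠ ⊥) : s.IsStarIdeal (s.idealClosure I) :=
  s.isStarIdeal_iff.mpr
    ⟨ne_bot_of_le_ne_bot hI (s.idealClosure.le_closure I), s.idealClosure.isClosed_closure I⟩

theorem star_coeIdeal {I : Ideal D} (hI : I ≠ ⊥) :
    s.star (I : FractionalIdeal D⁰ K) = s.idealClosure I := by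
  have hI' : (I : FractionalIdeal D⁰ K) ≠ 0 := FractionalIdeal.coeIdeal_ne_zero.mpr hI
  apply le_antisymm
  · rw [← (s.isStarIdeal_idealClosure hI).2]
    exact s.star_coeIdeal_mono hI (s.idealClosure.le_closure I)
  · obtain ⟨J, hJ⟩ := s.exists_star_coeIdeal_eq hI
    have hIJ : I ≤ J := (FractionalIdeal.coeIdeal_le_coeIdeal K).mp (hJ ▸ s.le_star _ hI')
    have hJ_star : s.IsStarIdeal J :=
      ⟨ne_bot_of_le_ne_bot hI hIJ, by rw [← hJ, s.star_idem _ hI']⟩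
    rw [hJ, FractionalIdeal.coeIdeal_le_coeIdeal]
    exact s.idealClosure.closure_min hIJ hJ_star.isClosed

theorem star_coeIdeal_eq_coeIdeal_iff {I J : Ideal D} (hI : I ≠ ⊥) :
    s.star (I : FractionalIdeal D⁰ K) = J ↔ s.idealClosure I = J := by
  rw [s.star_coeIdeal hI, FractionalIdeal.coeIdeal_inj]

theorem star_coeIdeal_eq_one_iff {I : Ideal D} (hI : I ≠ ⊥) :
    s.star (I : FractionalIdeal D⁰ K) = 1 ↔ s.idealClosure I = ⊤ := by
  rw [← FractionalIdeal.coeIdeal_top, s.star_coeIdeal_eq_coeIdeal_iff hI]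

theorem isFiniteTypeStarIdeal_iff {I : Ideal D} :
    s.IsFiniteTypeStarIdeal I ↔ ∃ J : Ideal D, J ≠ ⊥ ∧ J.FG ∧ s.idealClosure J = I :=
  exists_congr fun _ => and_congr_right fun hJ =>
    and_congr_right fun _ => s.star_coeIdeal_eq_coeIdeal_iff hJ

theorem isFiniteTypeStarIdeal_idealClosure {I : Ideal D} (hI : I ≠ ⊥) (hfg : I.FG) :
    s.IsFiniteTypeStarIdeal (s.idealClosure I) :=
  s.isFiniteTypeStarIdeal_iff.mpr ⟨I, hI, hfg, rfl⟩

theorem idealClosure_span_singleton_mul (a : D) (I : Ideal D) :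
    s.idealClosure (Ideal.span {a} * I) = Ideal.span {a} * s.idealClosure I := by
  rcases eq_or_ne a 0 with rfl | ha
  · simp [idealClosure_bot]
  rcases eq_or_ne I ⊥ with rfl | hI
  · simp [idealClosure_bot]
  have haI : Ideal.span {a} * I ≠ ⊥ := by simp [ha, hI]
  rw [← s.star_coeIdeal_eq_coeIdeal_iff haI, FractionalIdeal.coeIdeal_mul,
    FractionalIdeal.coeIdeal_mul, FractionalIdeal.coeIdeal_span_singleton,
    s.star_smul _ _ (by simpa using ha) (FractionalIdeal.coeIdeal_ne_zero.mpr hI),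
    s.star_coeIdeal hI]

theorem idealClosure_span_singleton (a : D) :
    s.idealClosure (Ideal.span {a}) = Ideal.span {a} := by
  simpa using s.idealClosure_span_singleton_mul a ⊤

theorem mul_idealClosure_le (I J : Ideal D) : I * s.idealClosure J ≤ s.idealClosure (I * J) := by
  refine Ideal.mul_le.mpr fun a ha b hb => ?_
  have hab : a * b ∈ Ideal.span {a} * s.idealClosure J :=
    Ideal.mul_mem_mul (Ideal.mem_span_singleton_self a) hb
  rw [← s.idealClosure_span_singleton_mul] at hab
  exact s.idealClosure.monotone
    (Ideal.mul_mono_left ((Ideal.span_singleton_le_iff_mem I).mpr ha)) hab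

theorem idealClosure_mul_idealClosure_le (I J : Ideal D) :
    s.idealClosure I * s.idealClosure J ≤ s.idealClosure (I * J) := calc
  _ ≤ s.idealClosure (s.idealClosure I * J) := s.mul_idealClosure_le _ J
  _ = s.idealClosure (J * s.idealClosure I) := by rw [mul_comm]
  _ ≤ s.idealClosure (J * I) := s.idealClosure.le_closure_iff.mp (s.mul_idealClosure_le J I)
  _ = s.idealClosure (I * J) := by rw [mul_comm]

theorem prod_idealClosure_le {ι : Type*} (F : Finset ι) (A : ι → Ideal D) :
    ∏ i ∈ F, s.idealClosure (A i) ≤ s.idealClosure (∏ i ∈ F, A i) := by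
  classical
  induction F using Finset.induction_on with
  | empty => simp
  | insert i F hi ih =>
    rw [Finset.prod_insert hi, Finset.prod_insert hi]
    exact (Ideal.mul_mono_right ih).trans (s.idealClosure_mul_idealClosure_le _ _)

theorem idealClosure_prod_idealClosure {ι : Type*} (F : Finset ι) (A : ι → Ideal D) :
    s.idealClosure (∏ i ∈ F, s.idealClosure (A i)) = s.idealClosure (∏ i ∈ F, A i) :=
  le_antisymm (s.idealClosure.le_closure_iff.mp (s.prod_idealClosure_le F A))
    (s.idealClosure.monotone (Finset.prod_le_prod' fun i _ => s.idealClosure.le_closure (A i)))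

end Closure

section FiniteCharacter

variable {s}

theorem FiniteCharacter.exists_fg_of_mem_idealClosure (hs : s.FiniteCharacter) {I : Ideal D}
    {d : D} (hd : d ∈ s.idealClosure I) : ∃ J ≤ I, J.FG ∧ d ∈ s.idealClosure J := by
  rcases eq_or_ne I ⊥ with rfl | hI
  · exact ⟨⊥, le_rfl, Submodule.fg_bot, hd⟩
  have hd' : algebraMap D K d ∈ s.star (I : FractionalIdeal D⁰ K) := by
    rw [s.star_coeIdeal hI]
    exact FractionalIdeal.mem_coeIdeal_of_mem D⁰ hd
  obtain ⟨J, hJ, hfg, hJI, hdJ⟩ := hs _ (FractionalIdeal.coeIdeal_ne_zero.mpr hI) _ hd'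
  obtain ⟨J, rfl⟩ := FractionalIdeal.le_one_iff_exists_coeIdeal.mp
    (hJI.trans FractionalIdeal.coeIdeal_le_one)
  rw [s.star_coeIdeal (FractionalIdeal.coeIdeal_ne_zero.mp hJ)] at hdJ
  obtain ⟨e, he, hed⟩ := (FractionalIdeal.mem_coeIdeal D⁰).mp hdJ
  rw [IsFractionRing.injective D K hed] at he
  exact ⟨J, (FractionalIdeal.coeIdeal_le_coeIdeal K).mp hJI,
    (FractionalIdeal.coeIdeal_fg D⁰ (IsFractionRing.injective D K) J).mp hfg, he⟩

theorem FiniteCharacter.isClosed_sSup (hs : s.FiniteCharacter) {S : Set (Ideal D)}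
    (hne : S.Nonempty) (hdir : DirectedOn (· ≤ ·) S) (hS : ∀ J ∈ S, s.idealClosure.IsClosed J) :
    s.idealClosure.IsClosed (sSup S) := by
  refine s.idealClosure.isClosed_iff_closure_le.mpr fun d hd => ?_
  obtain ⟨A, hA, hfg, hdA⟩ := hs.exists_fg_of_mem_idealClosure hd
  obtain ⟨J, hJ, hAJ⟩ := (CompleteLattice.isCompactElement_iff_le_of_directed_sSup_le _ A).mp
    ((Submodule.fg_iff_compact A).mp hfg) S hne hdir hA
  exact le_sSup hJ ((s.idealClosure.closure_min hAJ (hS J hJ)) hdA)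

theorem FiniteCharacter.exists_isMaxStarIdeal_ge (hs : s.FiniteCharacter) {I : Ideal D}
    (hI : I ≠ ⊥) (htop : s.idealClosure I ≠ ⊤) : ∃ P, s.IsMaxStarIdeal P ∧ I ≤ P := by
  have sSup_mem (S : Set (Ideal D)) (hS : ∀ J ∈ S, J < ⊤ ∧ s.idealClosure.IsClosed J)
      (hne : S.Nonempty) (hdir : DirectedOn (· ≤ ·) S) :
      sSup S < ⊤ ∧ s.idealClosure.IsClosed (sSup S) :=
    ⟨CompleteLattice.IsCompactElement.directed_sSup_lt_of_lt Ideal.isCompactElement_top hne hdir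
      fun J hJ => (hS J hJ).1, hs.isClosed_sSup hne hdir fun J hJ => (hS J hJ).2⟩
  obtain ⟨P, hIP, hP⟩ := zorn_le_nonempty₀ {J : Ideal D | J < ⊤ ∧ s.idealClosure.IsClosed J}
    (fun S hS hchain J hJ =>
      ⟨sSup S, sSup_mem S (fun _ hJ => hS hJ) ⟨J, hJ⟩ hchain.directedOn, fun _ => le_sSup⟩)
    (s.idealClosure I) ⟨htop.lt_top, s.idealClosure.isClosed_closure I⟩
  have hIP : I ≤ P := (s.idealClosure.le_closure I).trans hIP
  exact ⟨P, ⟨hP.prop.1.ne, s.isStarIdeal_iff.mpr ⟨ne_bot_of_le_ne_bot hI hIP, hP.prop.2⟩,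
    fun J hJ hJstar hPJ => (hP.eq_of_le ⟨hJ.lt_top, hJstar.isClosed⟩ hPJ).symm⟩, hIP⟩

theorem FiniteCharacter.idealClosure_eq_top (hs : s.FiniteCharacter) {I : Ideal D} (hI : I ≠ ⊥)
    (h : ∀ P, s.IsMaxStarIdeal P → ¬ I ≤ P) : s.idealClosure I = ⊤ := by
  by_contra htop
  obtain ⟨P, hP, hIP⟩ := hs.exists_isMaxStarIdeal_ge hI htop
  exact h P hP hIP

theorem FiniteCharacter.le_idealClosure_of_colon_not_le (hs : s.FiniteCharacter) {I J : Ideal D}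
    (hI : I ≠ ⊥) (h : ∀ P, s.IsMaxStarIdeal P → ¬ I.colon (J : Set D) ≤ P) :
    J ≤ s.idealClosure I := by
  have htop : s.idealClosure (I.colon (J : Set D)) = ⊤ :=
    hs.idealClosure_eq_top (ne_bot_of_le_ne_bot hI Ideal.le_colon) h
  calc J = ⊤ * J := (Ideal.top_mul J).symm
    _ ≤ s.idealClosure (I.colon (J : Set D)) * s.idealClosure J :=
      Ideal.mul_mono htop.ge (s.idealClosure.le_closure J)
    _ ≤ s.idealClosure (I.colon (J : Set D) * J) := s.idealClosure_mul_idealClosure_le _ _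
    _ ≤ s.idealClosure I := s.idealClosure.monotone (colon_mul_le I J)

end FiniteCharacter

section MaxStarIdeal

variable {s} {P : Ideal D}

theorem IsMaxStarIdeal.idealClosure_sup_eq_top (hP : s.IsMaxStarIdeal P) {J : Ideal D}
    (hJ : ¬ J ≤ P) : s.idealClosure (P ⊔ J) = ⊤ := by
  by_contra htop
  have hle : P ⊔ J ≤ s.idealClosure (P ⊔ J) := s.idealClosure.le_closure _
  have heq := hP.2.2 _ htop
    (s.isStarIdeal_idealClosure (ne_bot_of_le_ne_bot hP.2.1.1 le_sup_left))
    (le_sup_left.trans hle)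
  exact hJ ((le_sup_right.trans hle).trans_eq heq)

theorem IsMaxStarIdeal.eq_of_le (hP : s.IsMaxStarIdeal P) {Q : Ideal D}
    (hQ : s.IsMaxStarIdeal Q) (h : P ≤ Q) : P = Q :=
  (hP.2.2 Q hQ.1 hQ.2.1 h).symm

theorem IsMaxStarIdeal.isPrime (hP : s.IsMaxStarIdeal P) : P.IsPrime := by
  refine ⟨hP.1, fun {a b} hab => ?_⟩
  by_contra! hnot
  have htop (c : D) (hc : c ∉ P) : s.idealClosure (P ⊔ Ideal.span {c}) = ⊤ :=
    hP.idealClosure_sup_eq_top (by rwa [Ideal.span_singleton_le_iff_mem])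
  have hmul : (P ⊔ Ideal.span {a}) * (P ⊔ Ideal.span {b}) ≤ P := by
    rw [Ideal.sup_mul, Ideal.mul_sup (Ideal.span {a}), Ideal.span_singleton_mul_span_singleton]
    exact sup_le Ideal.mul_le_left
      (sup_le Ideal.mul_le_right ((Ideal.span_singleton_le_iff_mem P).mpr hab))
  have hle := (s.idealClosure_mul_idealClosure_le _ _).trans
    (s.idealClosure.closure_min hmul hP.2.1.isClosed)
  rw [htop a hnot.1, htop b hnot.2, Ideal.top_mul, top_le_iff] at hle
  exact hP.1 hle

end MaxStarIdeal

section Homogeneous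

variable {s} {I : Ideal D}

theorem IsHomog.idealClosure_sup_ne_top (hs : s.FiniteCharacter) (hI : s.IsHomog I)
    {J J' : Ideal D} (hJ : s.idealClosure.IsClosed J) (hJ' : s.idealClosure.IsClosed J')
    (hJtop : J ≠ ⊤) (hJtop' : J' ≠ ⊤) (hIJ : I ≤ J) (hIJ' : I ≤ J') :
    s.idealClosure (J ⊔ J') ≠ ⊤ := by
  intro htop
  obtain ⟨-, -, hfin, hI⟩ := hI
  obtain ⟨I₀, hI₀, hI₀fg, rfl⟩ := s.isFiniteTypeStarIdeal_iff.mp hfin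
  have hI₀J : I₀ ≤ J := (s.idealClosure.le_closure I₀).trans hIJ
  have hI₀J' : I₀ ≤ J' := (s.idealClosure.le_closure I₀).trans hIJ'
  obtain ⟨A, hA, hAfg, hAtop⟩ :=
    hs.exists_fg_of_mem_idealClosure ((Ideal.eq_top_iff_one _).mp htop)
  obtain ⟨L, hL, L', hL', hLfg, hLfg', hAL⟩ := exists_fg_le_sup_of_fg_of_le_sup hAfg hA
  have hne {N : Ideal D} : I₀ ⊔ N ≠ ⊥ := ne_bot_of_le_ne_bot hI₀ le_sup_left
  refine hI (s.idealClosure (I₀ ⊔ L)) (s.idealClosure (I₀ ⊔ L'))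
    (ne_top_of_le_ne_top hJtop (s.idealClosure.closure_min (sup_le hI₀J hL) hJ))
    (ne_top_of_le_ne_top hJtop' (s.idealClosure.closure_min (sup_le hI₀J' hL') hJ'))
    (s.isStarIdeal_idealClosure hne) (s.isStarIdeal_idealClosure hne)
    (s.isFiniteTypeStarIdeal_idealClosure hne (Submodule.FG.sup hI₀fg hLfg))
    (s.isFiniteTypeStarIdeal_idealClosure hne (Submodule.FG.sup hI₀fg hLfg'))
    (s.idealClosure.monotone le_sup_left) (s.idealClosure.monotone le_sup_left) ?_
  rw [Submodule.add_eq_sup, s.star_coeIdeal_eq_one_iff (ne_bot_of_le_ne_bot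
    (s.isStarIdeal_idealClosure hne).1 le_sup_left), s.idealClosure.closure_sup_closure]
  exact (Ideal.eq_top_iff_one _).mpr
    (s.idealClosure.monotone (hAL.trans (sup_le_sup le_sup_right le_sup_right)) hAtop)

theorem FiniteCharacter.isHomog_iff (hs : s.FiniteCharacter) :
    s.IsHomog I ↔ s.IsFiniteTypeStarIdeal I ∧ ∃! P, s.IsMaxStarIdeal P ∧ I ≤ P := by
  constructor
  · intro hI
    obtain ⟨P, hP, hIP⟩ :=
      hs.exists_isMaxStarIdeal_ge hI.2.1.1 (hI.2.1.isClosed.closure_eq.symm ▸ hI.1)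
    refine ⟨hI.2.2.1, P, ⟨hP, hIP⟩, fun Q ⟨hQ, hIQ⟩ => ?_⟩
    by_contra hne
    exact hI.idealClosure_sup_ne_top hs hP.2.1.isClosed hQ.2.1.isClosed hP.1 hQ.1 hIP hIQ
      (hP.idealClosure_sup_eq_top fun hle => hne (hQ.eq_of_le hP hle))
  · rintro ⟨hfin, P, ⟨hP, hIP⟩, huniq⟩
    have hstar : s.IsStarIdeal I := by
      obtain ⟨I₀, hI₀, -, rfl⟩ := s.isFiniteTypeStarIdeal_iff.mp hfin
      exact s.isStarIdeal_idealClosure hI₀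
    have le_P {J : Ideal D} (hJtop : J ≠ ⊤) (hJ : s.IsStarIdeal J) (hIJ : I ≤ J) : J ≤ P := by
      obtain ⟨Q, hQ, hJQ⟩ :=
        hs.exists_isMaxStarIdeal_ge hJ.1 (hJ.isClosed.closure_eq.symm ▸ hJtop)
      rwa [← huniq Q ⟨hQ, hIJ.trans hJQ⟩]
    refine ⟨ne_top_of_le_ne_top hP.1 hIP, hstar, hfin, ?_⟩
    intro J J' hJtop hJtop' hJ hJ' _ _ hIJ hIJ'
    rw [Submodule.add_eq_sup, ne_eq,
      s.star_coeIdeal_eq_one_iff (ne_bot_of_le_ne_bot hJ.1 le_sup_left)]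
    exact ne_top_of_le_ne_top hP.1 (s.idealClosure.closure_min
      (sup_le (le_P hJtop hJ hIJ) (le_P hJtop' hJ' hIJ')) hP.2.1.isClosed)

theorem IsHomog.eq_of_le (hs : s.FiniteCharacter) (hI : s.IsHomog I) {P Q : Ideal D}
    (hP : s.IsMaxStarIdeal P) (hQ : s.IsMaxStarIdeal Q) (hIP : I ≤ P) (hIQ : I ≤ Q) : P = Q :=
  (hs.isHomog_iff.mp hI).2.unique ⟨hP, hIP⟩ ⟨hQ, hIQ⟩

end Homogeneous

section SHDomain

/-- Independence of the maximal `*`-ideals: no two of them contain a common nonzero prime ideal. -/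
def IndependentMaxStarIdeals : Prop :=
  ∀ P Q : Ideal D, s.IsMaxStarIdeal P → s.IsMaxStarIdeal Q → P ≠ Q →
    ∀ L : Ideal D, L.IsPrime → L ≠ ⊥ → ¬ L ≤ P ⊓ Q

variable {s}

theorem IsSHDomain.exists_finset_isHomog (h : s.IsSHDomain) {x : D} (hx : x ≠ 0)
    (hu : ¬ IsUnit x) : ∃ T : Finset (Ideal D), (∀ J ∈ T, s.IsHomog J) ∧
      ∀ L : Ideal D, L.IsPrime → x ∈ L → ∃ J ∈ T, J ≤ L := by
  classical
  obtain ⟨T, hT, hTx⟩ := h x hx hu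
  have hne : T.prod ≠ ⊥ := Multiset.prod_ne_zero fun h0 => (hT _ h0).2.1.1 rfl
  rw [s.star_coeIdeal_eq_coeIdeal_iff hne] at hTx
  refine ⟨T.toFinset, fun J hJ => hT J (Multiset.mem_toFinset.mp hJ), fun L hL hxL => ?_⟩
  have hTL : T.prod ≤ L := calc
    T.prod ≤ Ideal.span {x} := (s.idealClosure.le_closure _).trans_eq hTx
    _ ≤ L := (Ideal.span_singleton_le_iff_mem L).mpr hxL
  simpa using hL.multiset_prod_le.mp hTL

theorem IsSHDomain.finiteStarCharacter (hs : s.FiniteCharacter) (h : s.IsSHDomain) :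
    s.FiniteStarCharacter := by
  intro x hx hu
  obtain ⟨T, hT, hTx⟩ := h.exists_finset_isHomog hx hu
  have hfin : (⋃ J ∈ T, {P | s.IsMaxStarIdeal P ∧ J ≤ P}).Finite :=
    T.finite_toSet.biUnion fun J hJ => Set.Subsingleton.finite
      fun P hP Q hQ => (hT J hJ).eq_of_le hs hP.1 hQ.1 hP.2 hQ.2
  refine hfin.subset fun P ⟨hP, hxP⟩ => ?_
  obtain ⟨J, hJ, hJP⟩ := hTx P hP.isPrime hxP
  exact Set.mem_biUnion hJ ⟨hP, hJP⟩

theorem IsSHDomain.independentMaxStarIdeals (hs : s.FiniteCharacter) (h : s.IsSHDomain) :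
    s.IndependentMaxStarIdeals := by
  intro P Q hP hQ hPQ L hL hL0 hLPQ
  obtain ⟨x, hxL, hx⟩ := Submodule.exists_mem_ne_zero_of_ne_bot hL0
  have hu : ¬ IsUnit x := fun hu => hL.ne_top (Ideal.eq_top_of_isUnit_mem L hxL hu)
  obtain ⟨T, hT, hTx⟩ := h.exists_finset_isHomog hx hu
  obtain ⟨J, hJ, hJL⟩ := hTx L hL hxL
  obtain ⟨hJP, hJQ⟩ := le_inf_iff.mp (hJL.trans hLPQ)
  exact hPQ ((hT J hJ).eq_of_le hs hP hQ hJP hJQ)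

variable (s) in
/-- `A` is a local component of `x` at the maximal `*`-ideal `P`: a finitely generated ideal
containing `x` that lies in no other maximal `*`-ideal and satisfies `A D_P = x D_P`. The last
condition is expressed by the colon ideal, which avoids localizing. -/
structure IsLocalComponent (x : D) (P A : Ideal D) : Prop where
  fg : A.FG
  mem : x ∈ A
  eq_of_le : ∀ Q, s.IsMaxStarIdeal Q → A ≤ Q → Q = P
  colon_not_le : ¬ (Ideal.span {x}).colon (A : Set D) ≤ P

variable {x : D} {P A : Ideal D}

theorem IsLocalComponent.le (hA : s.IsLocalComponent x P A) [hP : P.IsPrime] (hxP : x ∈ P) :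
    A ≤ P := by
  have hmul : (Ideal.span {x}).colon (A : Set D) * A ≤ P :=
    (colon_mul_le _ A).trans ((Ideal.span_singleton_le_iff_mem P).mpr hxP)
  exact (hP.mul_le.mp hmul).resolve_left hA.colon_not_le

theorem IsLocalComponent.ne_bot (hA : s.IsLocalComponent x P A) (hx : x ≠ 0) : A ≠ ⊥ :=
  (Submodule.ne_bot_iff A).mpr ⟨x, hA.mem, hx⟩

theorem IsLocalComponent.isHomog_idealClosure (hs : s.FiniteCharacter)
    (hA : s.IsLocalComponent x P A) (hP : s.IsMaxStarIdeal P) (hxP : x ∈ P) (hx : x ≠ 0) :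
    s.IsHomog (s.idealClosure A) := by
  have := hP.isPrime
  exact hs.isHomog_iff.mpr ⟨s.isFiniteTypeStarIdeal_idealClosure (hA.ne_bot hx) hA.fg, P,
    ⟨hP, s.idealClosure.closure_min (hA.le hxP) hP.2.1.isClosed⟩,
    fun Q ⟨hQ, hAQ⟩ => hA.eq_of_le Q hQ ((s.idealClosure.le_closure A).trans hAQ)⟩

theorem IndependentMaxStarIdeals.exists_isLocalComponent (hind : s.IndependentMaxStarIdeals)
    (hx : x ≠ 0) (hfin : {Q | s.IsMaxStarIdeal Q ∧ x ∈ Q}.Finite) (hP : s.IsMaxStarIdeal P) :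
    ∃ A, s.IsLocalComponent x P A := by
  classical
  have := hP.isPrime
  have hdvd : ∀ Q ∈ hfin.toFinset.erase P, ∃ a ∉ P, ∃ b ∉ Q, x ∣ a * b := by
    intro Q hQ
    obtain ⟨hQP, hQ⟩ := Finset.mem_erase.mp hQ
    have hQ : s.IsMaxStarIdeal Q := (hfin.mem_toFinset.mp hQ).1
    have := hQ.isPrime
    exact exists_dvd_mul_of_forall_isPrime_not_le_inf fun L hL hxL =>
      hind P Q hP hQ hQP.symm L hL ((Submodule.ne_bot_iff L).mpr ⟨x, hxL, hx⟩)
  obtain ⟨A, hfg, hxA, hnot, hcolon⟩ := exists_fg_mem_forall_not_le_colon_not_le _ hdvd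
  refine ⟨A, hfg, hxA, fun Q hQ hAQ => ?_, hcolon⟩
  by_contra hQP
  exact hnot Q (Finset.mem_erase.mpr ⟨hQP, hfin.mem_toFinset.mpr ⟨hQ, hAQ hxA⟩⟩) hAQ

variable {F : Finset (Ideal D)} {A : Ideal D → Ideal D}

theorem prod_le_span_of_isLocalComponent (hs : s.FiniteCharacter) (hx : x ≠ 0)
    (hF : ∀ P, s.IsMaxStarIdeal P → x ∈ P → P ∈ F)
    (hA : ∀ P ∈ F, s.IsLocalComponent x P (A P)) : ∏ P ∈ F, A P ≤ Ideal.span {x} := by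
  rw [← s.idealClosure_span_singleton x]
  refine hs.le_idealClosure_of_colon_not_le (by simpa using hx) fun P hP hle => ?_
  by_cases hxP : x ∈ P
  · have hPF : P ∈ F := hF P hP hxP
    have hprod : ∏ Q ∈ F, A Q ≤ A P := Ideal.prod_le_inf.trans (Finset.inf_le hPF)
    exact (hA P hPF).colon_not_le ((Submodule.colon_mono le_rfl hprod).trans hle)
  · exact hxP (hle (Ideal.le_colon (Ideal.mem_span_singleton_self x)))

theorem span_le_idealClosure_prod_of_isLocalComponent (hs : s.FiniteCharacter) (hx : x ≠ 0)
    (hA : ∀ P ∈ F, s.IsLocalComponent x P (A P)) :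
    Ideal.span {x} ≤ s.idealClosure (∏ P ∈ F, A P) := by
  classical
  have hne : ∏ P ∈ F, A P ≠ ⊥ := Finset.prod_ne_zero_iff.mpr fun P hP => (hA P hP).ne_bot hx
  refine hs.le_idealClosure_of_colon_not_le hne fun P hP hle => ?_
  have hmul : (∏ Q ∈ F.erase P, A Q) * Ideal.span {x} ≤ ∏ Q ∈ F, A Q := by
    by_cases hPF : P ∈ F
    · rw [← Finset.prod_erase_mul _ _ hPF]
      exact Ideal.mul_mono_right ((Ideal.span_singleton_le_iff_mem _).mpr (hA P hPF).mem)
    · rw [Finset.erase_eq_of_notMem hPF]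
      exact Ideal.mul_le_left
  have hprod : ∏ Q ∈ F.erase P, A Q ≤ P := fun a ha => hle <|
    Submodule.mem_colon.mpr fun b hb => hmul (Ideal.mul_mem_mul ha hb)
  obtain ⟨Q, hQ, hQP⟩ := hP.isPrime.prod_le.mp hprod
  obtain ⟨hne, hQF⟩ := Finset.mem_erase.mp hQ
  exact hne ((hA Q hQF).eq_of_le P hP hQP).symm

theorem isSHDomain_of_independentMaxStarIdeals (hs : s.FiniteCharacter)
    (hfin : s.FiniteStarCharacter) (hind : s.IndependentMaxStarIdeals) : s.IsSHDomain := by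
  intro x hx hu
  have hxfin := hfin x hx hu
  set F : Finset (Ideal D) := hxfin.toFinset
  have hF (P : Ideal D) : P ∈ F ↔ s.IsMaxStarIdeal P ∧ x ∈ P := hxfin.mem_toFinset
  choose! A hA using fun P (hP : P ∈ F) =>
    hind.exists_isLocalComponent hx hxfin ((hF P).mp hP).1
  have hhomog (P : Ideal D) (hP : P ∈ F) : s.IsHomog (s.idealClosure (A P)) :=
    (hA P hP).isHomog_idealClosure hs ((hF P).mp hP).1 ((hF P).mp hP).2 hx
  have hne : ∏ P ∈ F, s.idealClosure (A P) ≠ ⊥ :=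
    Finset.prod_ne_zero_iff.mpr fun P hP => (hhomog P hP).2.1.1
  refine ⟨F.val.map fun P => s.idealClosure (A P), by simpa using hhomog, ?_⟩
  rw [Finset.prod_map_val, s.star_coeIdeal_eq_coeIdeal_iff hne, s.idealClosure_prod_idealClosure]
  refine le_antisymm ?_ (span_le_idealClosure_prod_of_isLocalComponent hs hx hA)
  rw [← s.idealClosure_span_singleton x]
  exact s.idealClosure.monotone
    (prod_le_span_of_isLocalComponent hs hx (fun P hP hxP => (hF P).mpr ⟨hP, hxP⟩) hA)

end SHDomain

end StarOperation

/-- `D` is a `*`-SH domain iff `D` has finite `*`-character and no two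
distinct maximal `*`-ideals contain a common nonzero prime ideal. -/
theorem isSHDomain_iff {D K : Type*} [CommRing D] [IsDomain D] [Field K]
    [Algebra D K] [IsFractionRing D K] (s : StarOperation D K) (hs : s.FiniteCharacter) :
    s.IsSHDomain ↔
      s.FiniteStarCharacter ∧
      ∀ P Q : Ideal D, s.IsMaxStarIdeal P → s.IsMaxStarIdeal Q → P ≠ Q →
        ∀ L : Ideal D, L.IsPrime → L ≠ ⊥ → ¬(L ≤ P ⊓ Q) :=
  ⟨fun h => ⟨h.finiteStarCharacter hs, h.independentMaxStarIdeals hs⟩,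
    fun ⟨hfin, hind⟩ => StarOperation.isSHDomain_of_independentMaxStarIdeals hs hfin hind⟩
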